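/- Let A be a Nakayama algebra over a field k, i.e. A = kQ/I where Q is either an oriented cycle or a linearly oriented quiver of type 𝔸. Then Fac DA, the full subcategory of mod A of quotients of finite direct sums of copies of the k-dual DA = Hom_k(A,k), is closed under extensions: if 0 → X → E → Y → 0 is a short exact sequence in mod A with X, Y ∈ Fac DA, then E ∈ Fac DA. -/

import Mathlib

/-!
`A` is a Nakayama algebra over a field `k` (every finite-dimensional indecomposable
projective or injective `A`-module is uniserial).  Then `Fac DA`, the class of quotients
of finite direct sums of copies of the `k`-dual `DA = Hom_k(A, k)`, is closed under
extensions.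
-/

universe u

/-- The `k`-dual `DA = Hom_k(A, k)` of the algebra `A`. -/
abbrev kDual (k A : Type u) [CommSemiring k] [Ring A] [Algebra k A] : Type u :=
  A →ₗ[k] k

/-- The left `A`-module structure on `DA`: `(a • f) b = f (b * a)`. -/
instance (k A : Type u) [Field k] [Ring A] [Algebra k A] : SMul A (kDual k A) :=
  ⟨fun a f =>
    { toFun := fun b => f (b * a)
      map_add' := fun x y => by simp [add_mul]
      map_smul' := fun c x => by simp [smul_mul_assoc] }⟩

@[simp] lemma kDual.smul_apply {k A : Type u} [Field k] [Ring A] [Algebra k A]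
    (a : A) (f : kDual k A) (b : A) : (a • f) b = f (b * a) := rfl

instance (k A : Type u) [Field k] [Ring A] [Algebra k A] : Module A (kDual k A) where
  one_smul f := by ext b; simp
  mul_smul a a' f := by ext b; simp [mul_assoc]
  smul_zero a := by ext b; simp
  smul_add a f g := by ext b; simp
  add_smul a a' f := by ext b; simp [mul_add]
  zero_smul f := by ext b; simp

/-- `Fac DA`: modules admitting a surjection from `(DA)^n` for some `n > 0`. -/
def FacDual (k A : Type u) [Field k] [Ring A] [Algebra k A]
    (N : Type u) [AddCommGroup N] [Module A N] : Prop :=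
  ∃ n : ℕ, 0 < n ∧ ∃ p : (Fin n → kDual k A) →ₗ[A] N, Function.Surjective p

/-- A module is uniserial if its submodule lattice is totally ordered. -/
def IsUniserialModule (A M : Type u) [Ring A] [AddCommGroup M] [Module A M] : Prop :=
  ∀ S S' : Submodule A M, S ≤ S' ∨ S' ≤ S

/-- A module is indecomposable if it is nonzero and admits no nontrivial direct sum
decomposition. -/
def IsIndecomposableModule (A M : Type u) [Ring A] [AddCommGroup M] [Module A M] : Prop :=
  Nontrivial M ∧ ∀ S S' : Submodule A M, IsCompl S S' → S = ⊥ ∨ S' = ⊥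

namespace FacNak

section gen
variable {A : Type u} [Ring A]

lemma uniserial_of_surjective {M N : Type u} [AddCommGroup M] [Module A M]
    [AddCommGroup N] [Module A N] (h : IsUniserialModule A M) (f : M →ₗ[A] N)
    (hf : Function.Surjective f) : IsUniserialModule A N := by
  intro S S'
  rcases h (S.comap f) (S'.comap f) with h | h
  · left; exact (Submodule.comap_le_comap_iff_of_surjective hf).1 h
  · right; exact (Submodule.comap_le_comap_iff_of_surjective hf).1 h

lemma exists_factor {M N L : Type u} [AddCommGroup M] [Module A M]
    [AddCommGroup N] [Module A N] [AddCommGroup L] [Module A L] (p : M →ₗ[A] N) (h : M →ₗ[A] L)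
    (hp : Function.Surjective p) (hle : LinearMap.ker p ≤ LinearMap.ker h) :
    ∃ h' : N →ₗ[A] L, ∀ x, h' (p x) = h x := by
  refine ⟨(LinearMap.ker p).liftQ h hle ∘ₗ (p.quotKerEquivOfSurjective hp).symm.toLinearMap,
    fun x => ?_⟩
  have : (p.quotKerEquivOfSurjective hp).symm (p x) = (LinearMap.ker p).mkQ x := by
    rw [LinearEquiv.symm_apply_eq]
    rfl
  simp only [LinearMap.comp_apply, LinearEquiv.coe_coe, this, Submodule.mkQ_apply,
    Submodule.liftQ_apply]

lemma list_sum_comp {M N L : Type u} [AddCommGroup M] [Module A M]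
    [AddCommGroup N] [Module A N] [AddCommGroup L] [Module A L] (j : M →ₗ[A] N)
    (l : List (N →ₗ[A] L)) : (l.map fun e => e ∘ₗ j).sum = l.sum ∘ₗ j := by
  induction l with
  | nil => simp
  | cons a l ih => simp [ih, LinearMap.add_comp]

lemma list_comp_sum {M N L : Type u} [AddCommGroup M] [Module A M]
    [AddCommGroup N] [Module A N] [AddCommGroup L] [Module A L] (q : N →ₗ[A] L)
    (l : List (M →ₗ[A] N)) : (l.map fun e => q ∘ₗ e).sum = q ∘ₗ l.sum := by
  induction l with
  | nil => simp
  | cons a l ih => simp [ih, LinearMap.comp_add]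

lemma exists_comp_ne_zero {M N L : Type u} [AddCommGroup M] [Module A M]
    [AddCommGroup N] [Module A N] [AddCommGroup L] [Module A L] (q : N →ₗ[A] L)
    (l : List (M →ₗ[A] N)) (h : q ∘ₗ l.sum ≠ 0) : ∃ d ∈ l, q ∘ₗ d ≠ 0 := by
  by_contra hcon
  push Not at hcon
  apply h
  rw [← list_comp_sum]
  apply List.sum_eq_zero
  intro x hx
  obtain ⟨d, hd, rfl⟩ := List.mem_map.1 hx
  exact hcon d hd

lemma exists_surjective_of_sum {M N : Type u} [AddCommGroup M] [Module A M]
    [AddCommGroup N] [Module A N] [Nontrivial N] (h : IsUniserialModule A N)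
    (l : List (M →ₗ[A] N)) (hl : Function.Surjective l.sum) :
    ∃ g ∈ l, Function.Surjective g := by
  induction l with
  | nil =>
    obtain ⟨y, hy⟩ := exists_ne (0 : N)
    obtain ⟨x, hx⟩ := hl y
    exact absurd hx.symm (by simpa using hy)
  | cons g l ih =>
    have key : ∀ x, (g + l.sum) x ∈ LinearMap.range g ⊔ LinearMap.range l.sum := fun x =>
      Submodule.add_mem_sup ⟨x, rfl⟩ ⟨x, rfl⟩
    rw [List.sum_cons] at hl
    rcases h (LinearMap.range g) (LinearMap.range l.sum) with h | h
    · rw [sup_eq_right.2 h] at key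
      obtain ⟨g', hg', hs⟩ := ih (fun y => by
        obtain ⟨x, rfl⟩ := hl y
        exact key x)
      exact ⟨g', List.mem_cons_of_mem _ hg', hs⟩
    · rw [sup_eq_left.2 h] at key
      refine ⟨g, List.mem_cons_self, fun y => ?_⟩
      obtain ⟨x, rfl⟩ := hl y
      exact key x

lemma exists_injective_of_sum {M N : Type u} [AddCommGroup M] [Module A M]
    [AddCommGroup N] [Module A N] [Nontrivial M] (h : IsUniserialModule A M)
    (l : List (M →ₗ[A] N)) (hl : Function.Injective l.sum) :
    ∃ g ∈ l, Function.Injective g := by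
  induction l with
  | nil =>
    obtain ⟨y, hy⟩ := exists_ne (0 : M)
    exact absurd (hl (a₁ := y) (a₂ := 0) (by simp)) hy
  | cons g l ih =>
    rw [List.sum_cons, injective_iff_map_eq_zero] at hl
    rcases h (LinearMap.ker g) (LinearMap.ker l.sum) with h | h
    · refine ⟨g, List.mem_cons_self, (injective_iff_map_eq_zero g).2 fun x hx => hl x ?_⟩
      have h2 : l.sum x = 0 := h hx
      rw [LinearMap.add_apply, hx, h2, add_zero]
    · obtain ⟨g', hg', hs⟩ := ih ((injective_iff_map_eq_zero _).2 fun x hx => hl x (by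
        have h2 : g x = 0 := h hx
        rw [LinearMap.add_apply, hx, h2, add_zero]))
      exact ⟨g', List.mem_cons_of_mem _ hg', hs⟩

lemma decomp {M : Type u} [AddCommGroup M] [Module A M] [IsArtinian A M]
    (S : Submodule A M) : ∀ e : M →ₗ[A] M, (∀ x, e (e x) = e x) → LinearMap.range e = S →
    ∃ l : List (M →ₗ[A] M), (∀ d ∈ l, (∀ x, d (d x) = d x) ∧
      IsIndecomposableModule A (LinearMap.range d)) ∧ l.sum = e := by
  induction S using WellFoundedLT.induction with
  | ind S ih =>
  intro e he hS
  by_cases hi : IsIndecomposableModule A (LinearMap.range e)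
  · exact ⟨[e], by simpa using ⟨he, hi⟩, by simp⟩
  by_cases h0 : e = 0
  · exact ⟨[], by simp, by simp [h0]⟩
  have hnt : Nontrivial (LinearMap.range e) := by
    rw [Submodule.nontrivial_iff_ne_bot]
    simpa [LinearMap.range_eq_bot] using h0
  have : ∃ U V : Submodule A (LinearMap.range e), IsCompl U V ∧ U ≠ ⊥ ∧ V ≠ ⊥ := by
    by_contra hcon
    push Not at hcon
    refine hi ⟨hnt, fun U V hUV => ?_⟩
    by_cases hU : U = ⊥
    · exact Or.inl hU
    · exact Or.inr (hcon U V hUV hU)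
  obtain ⟨U, V, hUV, hU, hV⟩ := this
  have key : ∀ U V : Submodule A (LinearMap.range e), ∀ hUV : IsCompl U V, V ≠ ⊥ →
      ∃ l : List (M →ₗ[A] M), (∀ d ∈ l, (∀ x, d (d x) = d x) ∧
      IsIndecomposableModule A (LinearMap.range d)) ∧
      l.sum = (LinearMap.range e).subtype ∘ₗ U.projection V hUV ∘ₗ e.rangeRestrict := by
    intro U V hUV hV
    have hre : ∀ y : LinearMap.range e, e.rangeRestrict (y : M) = y := by
      rintro ⟨_, x, rfl⟩
      exact Subtype.ext (he x)
    have hid : ∀ y, U.projection V hUV (U.projection V hUV y) = U.projection V hUV y := fun y =>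
      Submodule.projection_apply_of_mem_left hUV (Submodule.projection_apply_mem hUV y)
    refine ih (LinearMap.range
      ((LinearMap.range e).subtype ∘ₗ U.projection V hUV ∘ₗ e.rangeRestrict)) ?_ _ ?_ rfl
    · rw [← hS]
      refine lt_of_le_of_ne ?_ ?_
      · rintro _ ⟨x, rfl⟩
        exact (U.projection V hUV (e.rangeRestrict x)).2
      · intro heq
        obtain ⟨v, hv, hv0⟩ := (Submodule.ne_bot_iff V).1 hV
        have h1 := heq.ge v.2
        obtain ⟨x, hx⟩ := h1
        have h2 : U.projection V hUV (e.rangeRestrict x) = v := Subtype.ext hx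
        have h3 : v ∈ U := h2 ▸ Submodule.projection_apply_mem hUV _
        exact hv0 (by simpa using (Submodule.disjoint_def.1 hUV.disjoint) v h3 hv)
    · intro x
      simp only [LinearMap.comp_apply, Submodule.subtype_apply, hre, hid]
  obtain ⟨l₁, h₁, s₁⟩ := key U V hUV hV
  obtain ⟨l₂, h₂, s₂⟩ := key V U hUV.symm hU
  refine ⟨l₁ ++ l₂, ?_, ?_⟩
  · intro d hd
    rcases List.mem_append.1 hd with hd | hd
    · exact h₁ d hd
    · exact h₂ d hd
  · rw [List.sum_append, s₁, s₂]
    ext x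
    have := Submodule.projection_add_projection_eq_self hUV (e.rangeRestrict x)
    have := congrArg Subtype.val this
    simpa using this

lemma decomp_id (M : Type u) [AddCommGroup M] [Module A M] [IsArtinian A M] :
    ∃ l : List (M →ₗ[A] M), (∀ d ∈ l, (∀ x, d (d x) = d x) ∧
      IsIndecomposableModule A (LinearMap.range d)) ∧ l.sum = LinearMap.id :=
  decomp _ LinearMap.id (fun _ => rfl) rfl

lemma rangeRestrict_coe {M : Type u} [AddCommGroup M] [Module A M] (e : M →ₗ[A] M)
    (he : ∀ x, e (e x) = e x) (y : LinearMap.range e) : e.rangeRestrict (y : M) = y := by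
  obtain ⟨_, x, rfl⟩ := y
  exact Subtype.ext (he x)

lemma projective_range {M : Type u} [AddCommGroup M] [Module A M] [Module.Projective A M]
    (e : M →ₗ[A] M) (he : ∀ x, e (e x) = e x) : Module.Projective A (LinearMap.range e) :=
  Module.Projective.of_split (LinearMap.range e).subtype e.rangeRestrict
    (LinearMap.ext fun y => rangeRestrict_coe e he y)

lemma injective_range {M : Type u} [AddCommGroup M] [Module A M] [Module.Injective A M]
    (e : M →ₗ[A] M) (he : ∀ x, e (e x) = e x) : Module.Injective A (LinearMap.range e) := by
  refine ⟨fun X Y _ _ _ _ f hf g => ?_⟩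
  obtain ⟨h, hh⟩ := Module.Injective.out f hf ((LinearMap.range e).subtype ∘ₗ g)
  refine ⟨e.rangeRestrict ∘ₗ h, fun x => ?_⟩
  rw [LinearMap.comp_apply, hh]
  exact rangeRestrict_coe e he _

lemma injective_pi (n : ℕ) {M : Type u} [AddCommGroup M] [Module A M] [Module.Injective A M] :
    Module.Injective A (Fin n → M) := by
  refine ⟨fun X Y _ _ _ _ f hf g => ?_⟩
  have := fun i : Fin n => Module.Injective.out f hf (LinearMap.proj i ∘ₗ g)
  choose h hh using this
  exact ⟨LinearMap.pi h, fun x => funext fun i => hh i x⟩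

end gen

section dual
variable (k A : Type u) [Field k] [Ring A] [Algebra k A]

/-- The map `V → DA` attached to a functional on `V`. -/
def toDual {V : Type u} [AddCommGroup V] [Module A V] [Module k V] [IsScalarTower k A V]
    (l : V →ₗ[k] k) : V →ₗ[A] kDual k A where
  toFun v := l ∘ₗ (LinearMap.toSpanSingleton A V v).restrictScalars k
  map_add' v w := by ext a; simp
  map_smul' a v := by ext b; simp [mul_smul]

lemma toDual_apply {V : Type u} [AddCommGroup V] [Module A V] [Module k V] [IsScalarTower k A V]
    (l : V →ₗ[k] k) (v : V) (a : A) : toDual k A l v a = l (a • v) := rfl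

lemma injective_dual : Module.Injective A (kDual k A) := by
  refine ⟨fun X Y _ _ _ _ f hf g => ?_⟩
  let _ : Module k X := Module.compHom X (algebraMap k A)
  let _ : Module k Y := Module.compHom Y (algebraMap k A)
  have : IsScalarTower k A X := IsScalarTower.of_algebraMap_smul fun _ _ => rfl
  have : IsScalarTower k A Y := IsScalarTower.of_algebraMap_smul fun _ _ => rfl
  obtain ⟨r, hr⟩ := LinearMap.exists_leftInverse_of_injective (f.restrictScalars k)
    (LinearMap.ker_eq_bot.2 hf)
  let l : X →ₗ[k] k :=
    { toFun := fun x => g x 1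
      map_add' := by simp
      map_smul' := fun c x => by
        have : c • x = algebraMap k A c • x := rfl
        rw [this, map_smul, kDual.smul_apply, one_mul, Algebra.algebraMap_eq_smul_one, map_smul]
        rfl }
  refine ⟨toDual k A (l ∘ₗ r), fun x => ?_⟩
  ext a
  have h1 : r (f (a • x)) = a • x := LinearMap.congr_fun hr (a • x)
  rw [toDual_apply, LinearMap.comp_apply, ← map_smul, h1]
  change g (a • x) 1 = g x a
  rw [map_smul, kDual.smul_apply, one_mul]

lemma exists_embedding [FiniteDimensional k A] (V : Type u) [AddCommGroup V] [Module A V]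
    [Module.Finite A V] :
    ∃ (n : ℕ) (j : V →ₗ[A] (Fin n → kDual k A)), Function.Injective j := by
  let _ : Module k V := Module.compHom V (algebraMap k A)
  have : IsScalarTower k A V := IsScalarTower.of_algebraMap_smul fun _ _ => rfl
  have : Module.Finite k V := Module.Finite.trans A V
  let b := Module.finBasis k V
  refine ⟨_, LinearMap.pi fun i => toDual k A (b.coord i), ?_⟩
  rw [injective_iff_map_eq_zero]
  intro v hv
  refine b.ext_elem fun i => ?_
  have := LinearMap.congr_fun (congrFun hv i) (1 : A)
  simpa [toDual_apply] using this

lemma finite_dual [FiniteDimensional k A] : Module.Finite A (kDual k A) := by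
  have : IsScalarTower k A (kDual k A) := ⟨fun c a f => by
    ext b
    change f (b * (c • a)) = c • f (b * a)
    rw [mul_smul_comm, map_smul]⟩
  exact Module.Finite.of_restrictScalars_finite k A _

/-- The trace of `DA` in `E`. -/
def tr (E : Type u) [AddCommGroup E] [Module A E] : Submodule A E :=
  ⨆ φ : kDual k A →ₗ[A] E, LinearMap.range φ

variable {E : Type u} [AddCommGroup E] [Module A E]

lemma mem_tr (φ : kDual k A →ₗ[A] E) (x) : φ x ∈ tr k A E :=
  Submodule.mem_iSup_of_mem φ ⟨x, rfl⟩

lemma mem_tr_pi {n : ℕ} (φ : (Fin n → kDual k A) →ₗ[A] E) (x) : φ x ∈ tr k A E := by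
  have hx : x = ∑ i, Pi.single i (x i) := (Finset.univ_sum_single x).symm
  rw [hx, map_sum]
  exact Submodule.sum_mem _ fun i _ =>
    mem_tr k A (φ ∘ₗ LinearMap.single A (fun _ : Fin n => kDual k A) i) (x i)

lemma facDual_of_tr [Module.Finite A E] (h : tr k A E = ⊤) : FacDual k A E := by
  classical
  have hc : IsCompactElement (⊤ : Submodule A E) :=
    (Submodule.fg_iff_compact _).1 Module.Finite.fg_top
  obtain ⟨s, hs⟩ := (CompleteLattice.isCompactElement_iff_exists_le_iSup_of_le_iSup _).1 hc _
    (fun φ : kDual k A →ₗ[A] E => LinearMap.range φ) h.ge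
  let e := (insert 0 s).equivFin
  let Φ : (Fin (insert 0 s).card → kDual k A) →ₗ[A] E :=
    ∑ i, (e.symm i).1 ∘ₗ LinearMap.proj i
  refine ⟨_, Finset.card_pos.2 ⟨0, Finset.mem_insert_self 0 s⟩, Φ, ?_⟩
  rw [← LinearMap.range_eq_top, ← top_le_iff]
  refine hs.trans (Finset.sup_le fun φ hφ => ?_)
  rintro _ ⟨x, rfl⟩
  refine ⟨Pi.single (e ⟨φ, Finset.mem_insert_of_mem hφ⟩) x, ?_⟩
  simp only [Φ, LinearMap.sum_apply, LinearMap.comp_apply, LinearMap.proj_apply]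
  rw [Finset.sum_eq_single (e ⟨φ, Finset.mem_insert_of_mem hφ⟩)]
  · simp
  · intro b _ hb
    rw [Pi.single_eq_of_ne hb, map_zero]
  · simp

lemma exists_inj_summand [FiniteDimensional k A] {N : Type u} [AddCommGroup N] [Module A N]
    (φ : kDual k A →ₗ[A] N) (hφ : φ ≠ 0) :
    ∃ (I : Type u) (_ : AddCommGroup I) (_ : Module A I) (p : kDual k A →ₗ[A] I)
      (i : I →ₗ[A] N), Module.Finite A I ∧ Module.Injective A I ∧ IsIndecomposableModule A I ∧
      Function.Surjective p ∧ i ≠ 0 := by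
  have := IsArtinianRing.of_finite k A
  have := injective_dual k A
  have := finite_dual k A
  obtain ⟨l, hl, hs⟩ := decomp_id (A := A) (kDual k A)
  obtain ⟨d, hdl, hd⟩ := exists_comp_ne_zero φ l (by rw [hs, LinearMap.comp_id]; exact hφ)
  obtain ⟨hdd, hdi⟩ := hl d hdl
  refine ⟨LinearMap.range d, inferInstance, inferInstance, d.rangeRestrict,
    φ ∘ₗ (LinearMap.range d).subtype, Module.Finite.of_surjective _ d.surjective_rangeRestrict,
    injective_range d hdd, hdi, d.surjective_rangeRestrict, fun h0 => hd ?_⟩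
  ext x : 1
  exact LinearMap.congr_fun h0 (d.rangeRestrict x)

lemma exists_proj_cover [IsArtinianRing A] {I : Type u} [AddCommGroup I] [Module A I]
    [Module.Finite A I] [Nontrivial I] (hI : IsUniserialModule A I) :
    ∃ (P : Type u) (_ : AddCommGroup P) (_ : Module A P) (π : P →ₗ[A] I),
      Module.Finite A P ∧ Module.Projective A P ∧ IsIndecomposableModule A P ∧
      Function.Surjective π := by
  obtain ⟨n, q, hq⟩ := Module.Finite.exists_fin' A I
  obtain ⟨l, hl, hs⟩ := decomp_id (A := A) (Fin n → A)
  have hsum : Function.Surjective (l.map fun e => q ∘ₗ e).sum := by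
    have h1 := list_comp_sum q l
    rw [hs, LinearMap.comp_id] at h1
    rw [h1]; exact hq
  obtain ⟨_, hmem, hsurj⟩ := exists_surjective_of_sum hI _ hsum
  obtain ⟨e, hel, rfl⟩ := List.mem_map.1 hmem
  obtain ⟨hee, hei⟩ := hl e hel
  refine ⟨LinearMap.range e, inferInstance, inferInstance, q ∘ₗ (LinearMap.range e).subtype,
    Module.Finite.of_surjective _ e.surjective_rangeRestrict, projective_range e hee, hei,
    fun y => ?_⟩
  obtain ⟨x, hx⟩ := hsurj y
  exact ⟨⟨e x, x, rfl⟩, hx⟩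

lemma exists_inj_hull [FiniteDimensional k A] {V : Type u} [AddCommGroup V] [Module A V]
    [Module.Finite A V] [Nontrivial V] (hV : IsUniserialModule A V) :
    ∃ (J : Type u) (_ : AddCommGroup J) (_ : Module A J) (n : ℕ)
      (p : (Fin n → kDual k A) →ₗ[A] J) (j : V →ₗ[A] J),
      Module.Finite A J ∧ Module.Injective A J ∧ IsIndecomposableModule A J ∧
      Function.Surjective p ∧ Function.Injective j := by
  have := IsArtinianRing.of_finite k A
  have := injective_dual k A
  have := finite_dual k A
  obtain ⟨n, q, hq⟩ := exists_embedding k A V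
  have := injective_pi (A := A) n (M := kDual k A)
  obtain ⟨l, hl, hs⟩ := decomp_id (A := A) (Fin n → kDual k A)
  have hsum : Function.Injective (l.map fun e => e ∘ₗ q).sum := by
    have h1 := list_sum_comp q l
    rw [hs, LinearMap.id_comp] at h1
    rw [h1]; exact hq
  obtain ⟨_, hmem, hinj⟩ := exists_injective_of_sum hV _ hsum
  obtain ⟨e, hel, rfl⟩ := List.mem_map.1 hmem
  obtain ⟨hee, hei⟩ := hl e hel
  exact ⟨LinearMap.range e, inferInstance, inferInstance, n, e.rangeRestrict,
    e.rangeRestrict ∘ₗ q,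
    Module.Finite.of_surjective _ e.surjective_rangeRestrict, injective_range e hee, hei,
    e.surjective_rangeRestrict, fun x y hxy => hinj (congrArg Subtype.val hxy)⟩

end dual

end FacNak

open FacNak
/-- If `A` is a Nakayama algebra over `k` (equivalently: every finite-dimensional
indecomposable projective and every finite-dimensional indecomposable injective
`A`-module is uniserial), then `Fac DA` is closed under extensions: for any short exact
sequence `0 → X → E → Y → 0` in `mod A` with `X, Y ∈ Fac DA`, also `E ∈ Fac DA`. -/
theorem facDual_closed_under_extensions_of_nakayama
    (k A : Type u) [Field k] [Ring A] [Algebra k A] [FiniteDimensional k A]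
    (hNak : ∀ (M : Type u) [AddCommGroup M] [Module A M], Module.Finite A M →
      IsIndecomposableModule A M →
      (Module.Projective A M ∨ Module.Injective A M) →
      IsUniserialModule A M)
    (X E Y : Type u)
    [AddCommGroup X] [Module A X] [Module.Finite A X]
    [AddCommGroup E] [Module A E] [Module.Finite A E]
    [AddCommGroup Y] [Module A Y] [Module.Finite A Y]
    (f : X →ₗ[A] E) (g : E →ₗ[A] Y)
    (hf : Function.Injective f) (hg : Function.Surjective g)
    (hfg : LinearMap.range f = LinearMap.ker g)
    (hX : FacDual k A X) (hY : FacDual k A Y) :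
    FacDual k A E := by

  classical
  have := IsArtinianRing.of_finite k A
  refine facDual_of_tr k A ?_
  by_contra hT
  -- a nonzero map from `DA` to `E / T`
  obtain ⟨nY, -, pY, hpY⟩ := hY
  obtain ⟨nX, -, pX, hpX⟩ := hX
  have hfT : ∀ x, f x ∈ tr k A E := fun x => by
    obtain ⟨z, rfl⟩ := hpX x
    exact mem_tr_pi k A (f ∘ₗ pX) z
  have hker : LinearMap.ker g ≤ LinearMap.ker (tr k A E).mkQ := by
    rw [← hfg, Submodule.ker_mkQ]
    rintro _ ⟨x, rfl⟩
    exact hfT x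
  have hφ : ∃ φ : kDual k A →ₗ[A] (E ⧸ tr k A E), φ ≠ 0 := by
    by_contra hcon
    push Not at hcon
    apply hT
    rw [eq_top_iff]
    intro e _
    obtain ⟨z, hz⟩ := hpY (g e)
    obtain ⟨q, hq⟩ := exists_factor g (tr k A E).mkQ hg hker
    have h0 : q (pY z) = 0 := by
      have hx : z = ∑ i, Pi.single i (z i) := (Finset.univ_sum_single z).symm
      rw [hx, map_sum, map_sum]
      exact Finset.sum_eq_zero fun i _ =>
        LinearMap.congr_fun (hcon (q ∘ₗ pY ∘ₗ LinearMap.single A (fun _ => kDual k A) i)) (z i)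
    rw [hz, hq] at h0
    simpa using h0
  obtain ⟨φ, hφ⟩ := hφ
  -- an indecomposable injective summand `I` of `DA` on which it is nonzero
  obtain ⟨I, _, _, p, i, _, hIinj, hIind, hp, hi⟩ := exists_inj_summand k A φ hφ
  have hIuni := hNak I inferInstance hIind (Or.inr hIinj)
  have hInt := hIind.1
  -- an indecomposable projective mapping onto it
  obtain ⟨P, _, _, π, _, hProj, hPind, hπ⟩ := exists_proj_cover A hIuni
  have hPuni := hNak P inferInstance hPind (Or.inl hProj)
  -- lift to `E`
  obtain ⟨h, hh⟩ := Module.projective_lifting_property (tr k A E).mkQ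
    (i ∘ₗ π) (Submodule.mkQ_surjective _)
  have hnot : ¬ ∀ x, h x ∈ tr k A E := by
    intro hall
    apply hi
    ext x : 1
    obtain ⟨y, rfl⟩ := hπ x
    have h1 := LinearMap.congr_fun hh y
    simp only [LinearMap.comp_apply] at h1
    have h2 : (tr k A E).mkQ (h y) = 0 := by simpa using hall y
    rw [h2] at h1
    exact h1.symm
  apply hnot
  rcases hPuni (LinearMap.ker π) (LinearMap.ker h) with hle | hle
  · -- `h` factors through the injective
    obtain ⟨h', hh'⟩ := exists_factor π h hπ hle
    intro x
    obtain ⟨z, hz⟩ := hp (π x)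
    have h1 := mem_tr k A (h' ∘ₗ p) z
    rwa [LinearMap.comp_apply, hz, hh'] at h1
  · -- the image `V` of `h` maps onto the injective
    obtain ⟨ψ, hψ⟩ := exists_factor h.rangeRestrict π h.surjective_rangeRestrict
      (by rwa [LinearMap.ker_rangeRestrict])
    have hψs : Function.Surjective ψ := fun y => by
      obtain ⟨x, rfl⟩ := hπ y
      exact ⟨_, hψ x⟩
    have hVuni : IsUniserialModule A (LinearMap.range h) :=
      uniserial_of_surjective hPuni h.rangeRestrict h.surjective_rangeRestrict
    have hVnt : Nontrivial (LinearMap.range h) := hψs.nontrivial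
    obtain ⟨J, _, _, m, c, j, _, hJinj, hJind, hc, hj⟩ := exists_inj_hull k A hVuni
    have hJuni := hNak J inferInstance hJind (Or.inr hJinj)
    obtain ⟨ψ', hψ'⟩ := Module.Injective.out j hj ψ
    have hjs : Function.Surjective j := by
      rcases hJuni (LinearMap.range j) (LinearMap.ker ψ') with hle | hle
      · exfalso
        obtain ⟨y, hy⟩ := exists_ne (0 : I)
        obtain ⟨x, rfl⟩ := hψs y
        exact hy (by rw [← hψ']; exact hle ⟨x, rfl⟩)
      · intro z
        obtain ⟨x, hx⟩ := hψs (ψ' z)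
        have h1 : z - j x ∈ LinearMap.ker ψ' := by
          rw [LinearMap.mem_ker, map_sub, hψ', hx, sub_self]
        obtain ⟨w, hw⟩ := hle h1
        exact ⟨w + x, by rw [map_add, hw, sub_add_cancel]⟩
    let e := LinearEquiv.ofBijective j ⟨hj, hjs⟩
    intro x
    obtain ⟨z, hz⟩ := hc (j (h.rangeRestrict x))
    have h1 := mem_tr_pi k A ((LinearMap.range h).subtype ∘ₗ e.symm.toLinearMap ∘ₗ c) z
    have h2 : e.symm (j (h.rangeRestrict x)) = h.rangeRestrict x := e.symm_apply_apply _
    rw [LinearMap.comp_apply, LinearMap.comp_apply, hz, LinearEquiv.coe_coe, h2] at h1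
    exact h1
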